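/- arXiv:2201.06501 — 2 statements merged into one kernel-verified Lean document; each statement's English description precedes it below -/
import Mathlib

section
/- For any positive integer s, define θ_i = s!(2s-i)!/((2s)! i!(s-i)!) for 0 ≤ i ≤ s and θ_i = 0 for i > s. Define the s×s symmetric matrix Υ = (γ_{ij})_{i,j=0}^{s-1} with γ_{ij} = ((-1)^i + (-1)^j) ∑_{ℓ=max(0,i+j+1-s)}^{min(i,j)} (-1)^{ℓ+1} θ_ℓ θ_{i+j+1-ℓ}. Then Υ = -U^T D̂ U, where D̂ = diag(d̂_0, ..., d̂_{s-1}) with d̂_k = (k!)²/((2k)!(2k+1)!), and U = (μ_{ij})_{i,j=0}^{s-1} is upper triangular with μ_{ij} = [s!/(2s)!] · [(2i+1)!/(i!(i+j+1)!)] · [(2s+i-j)!/(s-1-j)!] · [(s-1-(i+j)/2)!((i+j)/2)! / ((s-(j-i)/2)!((j-i)/2)!)] when i ≤ j and i ≡ j (mod 2), and μ_{ij} = 0 otherwise. In particular Υ is negative definite. -/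
/-- The Padé numerator coefficients `θ_i = s!(2s-i)!/((2s)! i!(s-i)!)` for `i ≤ s`, `0` otherwise. -/
noncomputable def padeTheta (s : ℕ) (i : ℕ) : ℝ :=
  if i ≤ s then
    ((Nat.factorial s : ℝ) * (Nat.factorial (2 * s - i) : ℝ)) /
      ((Nat.factorial (2 * s) : ℝ) * (Nat.factorial i : ℝ) * (Nat.factorial (s - i) : ℝ))
  else 0

/-- The matrix `Υ` of the `(s,s)` diagonal Padé approximation. -/
noncomputable def padeUpsilon (s : ℕ) : Matrix (Fin s) (Fin s) ℝ :=
  Matrix.of fun i j =>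
    ((-1 : ℝ) ^ i.val + (-1 : ℝ) ^ j.val) *
      ∑ ℓ ∈ Finset.Icc (i.val + j.val + 1 - s) (min i.val j.val),
        (-1 : ℝ) ^ (ℓ + 1) * padeTheta s ℓ * padeTheta s (i.val + j.val + 1 - ℓ)

/-- The diagonal matrix `D̂` with `d̂_k = (k!)²/((2k)!(2k+1)!)`. -/
noncomputable def padeD (s : ℕ) : Matrix (Fin s) (Fin s) ℝ :=
  Matrix.diagonal fun k =>
    (Nat.factorial k.val : ℝ) ^ 2 /
      ((Nat.factorial (2 * k.val) : ℝ) * (Nat.factorial (2 * k.val + 1) : ℝ))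

/-- The upper triangular matrix `U` with entries `μ_{ij}`. -/
noncomputable def padeU (s : ℕ) : Matrix (Fin s) (Fin s) ℝ :=
  Matrix.of fun i j =>
    if i.val ≤ j.val ∧ i.val % 2 = j.val % 2 then
      ((Nat.factorial s : ℝ) / (Nat.factorial (2 * s) : ℝ)) *
        ((Nat.factorial (2 * i.val + 1) : ℝ) /
          ((Nat.factorial i.val : ℝ) * (Nat.factorial (i.val + j.val + 1) : ℝ))) *
        ((Nat.factorial (2 * s + i.val - j.val) : ℝ) / (Nat.factorial (s - 1 - j.val) : ℝ)) *
        ((Nat.factorial (s - 1 - (i.val + j.val) / 2) : ℝ) *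
            (Nat.factorial ((i.val + j.val) / 2) : ℝ) /
          ((Nat.factorial (s - (j.val - i.val) / 2) : ℝ) *
            (Nat.factorial ((j.val - i.val) / 2) : ℝ)))
    else 0

/-!
Let `P = ∑ θ_i x^i` be the Padé numerator. The Euclidean algorithm applied to the even part of `P`
and twice its odd part has remainders `V_0, V_1, V_2, …` with `V_k = x⁻¹ V_{k+1} + c_k V_{k+2}`,
where `c_k = 1 / (4 (2k+1) (2k+3))`, and row `k` of `U` holds the coefficients of `x⁻¹ V_{k+1}`.
All `V_k` are given by a single formula, rational in `s`, so that the recurrence may be checked with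
`s` replaced by an element `a` of a field, regardless of the vanishing of `θ_i` for `i > s`.

Since `d̂_{k+1} = c_k d̂_k`, the expressions `d̂_k (V_k(x) V_{k+1}(y) + V_{k+1}(x) V_k(y))`
telescope as in the Christoffel–Darboux formula:
`(x⁻¹ + y⁻¹) ∑ d̂_k V_{k+1}(x) V_{k+1}(y) = V_0(x) V_1(y) + V_1(x) V_0(y)`.
The right-hand side is `P(x) P(y) - P(-x) P(-y)`, and dividing by `x⁻¹ + y⁻¹` turns its coefficients
into the alternating sums which define `Υ`.
-/

open Finset Polynomial
open scoped Nat

section ThreeTermRecurrence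

variable {A : Type*} [CommRing A]

/-- The coefficient of `x^p y^q` in `V_k(x) V_{k+1}(y) + V_{k+1}(x) V_k(y)`, where
`V_k = ∑ R k p x^p`: the analogue with a plus sign of the Casoratian of consecutive rows. -/
def symmCasoratian (R : ℕ → ℕ → A) (k p q : ℕ) : A :=
  R k p * R (k + 1) q + R (k + 1) p * R k q

theorem sum_mul_eq_symmCasoratian_sub {R : ℕ → ℕ → A} {c d : ℕ → A}
    (hR : ∀ k p, R k p = R (k + 1) (p + 1) + c k * R (k + 2) p)
    (hd : ∀ k, d (k + 1) = c k * d k) (n p q : ℕ) :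
    ∑ k ∈ range n,
        d k * (R (k + 1) (p + 1) * R (k + 1) q + R (k + 1) p * R (k + 1) (q + 1)) =
      d 0 * symmCasoratian R 0 p q - d n * symmCasoratian R n p q := by
  rw [← sum_range_sub' fun k => d k * symmCasoratian R k p q]
  refine sum_congr rfl fun k _ => ?_
  rw [symmCasoratian, symmCasoratian, hd, hR k p, hR k q]
  ring

/-- The hypothesis says that `(x⁻¹ + y⁻¹) S(x, y) = w(x, y)` for the generating functions, and the
conclusion expands `S` in powers of `y`. -/
theorem neg_one_pow_mul_eq_sum_of_add_eq {S w : ℕ → ℕ → A} {n : ℕ} (h₀ : ∀ p, S p 0 = 0)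
    (hS : ∀ p q, q < n → S (p + 1) q + S p (q + 1) = w p q) (p : ℕ) {q : ℕ} (hq : q < n) :
    (-1) ^ q * S p (q + 1) = ∑ l ∈ range (q + 1), (-1) ^ l * w (p + q - l) l := by
  induction q generalizing p with
  | zero => simpa [h₀] using hS p 0 hq
  | succ q ih =>
    have ih' := ih (p + 1) (by lia)
    rw [show p + 1 + q = p + (q + 1) by lia] at ih'
    rw [sum_range_succ, ← ih', Nat.add_sub_cancel, ← hS p (q + 1) hq]
    ring

end ThreeTermRecurrence

section Pochhammer

theorem ascPochhammer_succ_eval_left {S : Type*} [CommSemiring S] (x : S) (m : ℕ) :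
    (ascPochhammer S (m + 1)).eval x = x * (ascPochhammer S m).eval (x + 1) := by
  simp [ascPochhammer_succ_left]

theorem descPochhammer_succ_eval_left {R : Type*} [CommRing R] (x : R) (m : ℕ) :
    (descPochhammer R (m + 1)).eval x = x * (descPochhammer R m).eval (x - 1) := by
  simp [descPochhammer_succ_left]

variable {K : Type*} [Field K] [CharZero K]

theorem ascPochhammer_succ_eval_add_half (k m : ℕ) :
    (ascPochhammer K (m + 1)).eval (k + 1 / 2 : K) =
      (ascPochhammer K m).eval (k + 1 / 2 : K) * ((2 * k + 1 + 2 * m) / 2) := by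
  rw [ascPochhammer_succ_eval]
  ring

theorem ascPochhammer_succ_eval_add_half_left (k m : ℕ) :
    (ascPochhammer K (m + 1)).eval (k + 1 / 2 : K) =
      (2 * k + 1) / 2 * (ascPochhammer K m).eval ((k + 1 : ℕ) + 1 / 2 : K) := by
  rw [ascPochhammer_succ_eval_left]
  push_cast
  ring_nf

theorem descPochhammer_succ_eval_sub_half (a : K) (m : ℕ) :
    (descPochhammer K (m + 1)).eval (a - 1 / 2) =
      (descPochhammer K m).eval (a - 1 / 2) * ((2 * a - 1 - 2 * m) / 2) := by
  rw [descPochhammer_succ_eval]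
  ring

theorem four_pow_mul_ascPochhammer_eval_add_half (k m : ℕ) :
    4 ^ m * (ascPochhammer K m).eval (k + 1 / 2 : K) =
      ((2 * (k + m))! * k !) / ((2 * k)! * (k + m)!) := by
  induction m with
  | zero => simp [div_self, Nat.factorial_ne_zero]
  | succ m ih =>
    rw [ascPochhammer_succ_eval_add_half, pow_succ, mul_mul_mul_comm, ih,
      show 2 * (k + (m + 1)) = 2 * (k + m) + 1 + 1 by lia, ← add_assoc k m 1]
    simp only [Nat.factorial_succ, Nat.cast_mul, Nat.cast_add, Nat.cast_one, Nat.cast_ofNat]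
    have : (k + m + 1 : K) ≠ 0 := by norm_cast
    field_simp
    ring

theorem four_pow_mul_descPochhammer_eval_sub_half (n m : ℕ) :
    4 ^ m * (descPochhammer K m).eval ((n + m : ℕ) - 1 / 2 : K) =
      ((2 * (n + m))! * n !) / ((2 * n)! * (n + m)!) := by
  rw [← four_pow_mul_ascPochhammer_eval_add_half, descPochhammer_eval_eq_ascPochhammer]
  push_cast
  ring_nf

end Pochhammer

section Remainders

variable {K : Type*} [Field K]

/-- The coefficient of `x^(k+2m)` in the `k`-th remainder of the Euclidean algorithm for the even
part and twice the odd part of the Padé numerator. The parameter `a` stands for `s`; at the positive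
half-integers below `m` the denominator vanishes. -/
noncomputable def padeRemainderCoeff (a : K) (k m : ℕ) : K :=
  (descPochhammer K m).eval (a - k - m) /
    (16 ^ m * m ! * (ascPochhammer K m).eval (k + 1 / 2 : K) *
      (descPochhammer K m).eval (a - 1 / 2))

/-- The coefficient of `x^p` in the `k`-th remainder of the Euclidean algorithm for the even part
and twice the odd part of the Padé numerator, with `a` in place of `s`. -/
noncomputable def padeRemainder (a : K) (k p : ℕ) : K :=
  if k ≤ p ∧ k % 2 = p % 2 then padeRemainderCoeff a k ((p - k) / 2) else 0

theorem padeRemainder_add_two_mul (a : K) (k m : ℕ) :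
    padeRemainder a k (k + 2 * m) = padeRemainderCoeff a k m := by
  rw [padeRemainder, if_pos (by lia), show (k + 2 * m - k) / 2 = m by lia]

theorem padeRemainder_of_lt (a : K) {k p : ℕ} (h : p < k) : padeRemainder a k p = 0 :=
  if_neg (by lia)

theorem padeRemainder_of_mod_two_ne (a : K) {k p : ℕ} (h : k % 2 ≠ p % 2) :
    padeRemainder a k p = 0 :=
  if_neg (by lia)

theorem neg_one_pow_mul_padeRemainder (a : K) (k p : ℕ) :
    (-1) ^ p * padeRemainder a k p = (-1) ^ k * padeRemainder a k p := by
  by_cases h : k % 2 = p % 2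
  · rw [neg_one_pow_congr (R := K) (m := p) (n := k) (by simp only [Nat.even_iff, h])]
  · simp [padeRemainder_of_mod_two_ne a h]

theorem padeRemainderCoeff_zero (a : K) (k : ℕ) : padeRemainderCoeff a k 0 = 1 := by
  simp [padeRemainderCoeff]

theorem padeRemainder_self (a : K) (k : ℕ) : padeRemainder a k k = 1 := by
  simpa [padeRemainderCoeff_zero] using padeRemainder_add_two_mul a k 0

theorem padeRemainderCoeff_natCast_eq_zero {s k m : ℕ} (h : k + m ≤ s) (h' : s < k + 2 * m) :
    padeRemainderCoeff (s : K) k m = 0 := by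
  rw [padeRemainderCoeff, ← Nat.cast_sub (by lia), ← Nat.cast_sub (by lia),
    descPochhammer_eval_eq_descFactorial, Nat.descFactorial_of_lt (by lia), Nat.cast_zero,
    zero_div]

variable [CharZero K]

theorem padeRemainderCoeff_succ_succ (a : K) (k m : ℕ) :
    padeRemainderCoeff a (k + 1) (m + 1) =
      (a - k - 2 * m - 2) / (4 * (m + 1) * (2 * k + 3) * (2 * a - 1 - 2 * m)) *
        padeRemainderCoeff a (k + 2) m := by
  have h_num : (descPochhammer K (m + 1)).eval (a - (k + 1 : ℕ) - (m + 1 : ℕ)) =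
      (descPochhammer K m).eval (a - (k + 2 : ℕ) - m) * (a - k - 2 * m - 2) := by
    rw [descPochhammer_succ_eval]
    push_cast
    ring_nf
  rw [padeRemainderCoeff, padeRemainderCoeff, h_num, descPochhammer_succ_eval_sub_half,
    ascPochhammer_succ_eval_add_half_left, Nat.factorial_succ, pow_succ, add_assoc k 1 1]
  push_cast
  generalize 2 * a - 1 - 2 * m = u, a - k - 2 * m - 2 = v
  rw [show 2 * ((k : K) + 1) + 1 = 2 * k + 3 by ring]
  field_simp
  ring

theorem padeRemainderCoeff_succ (a : K) (k m : ℕ) :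
    padeRemainderCoeff a k (m + 1) =
      (a - k - m - 1) * (2 * k + 3 + 2 * m) /
          (4 * (m + 1) * (2 * k + 1) * (2 * k + 3) * (2 * a - 1 - 2 * m)) *
        padeRemainderCoeff a (k + 2) m := by
  have hk : (2 * k + 3 : K) ≠ 0 := by norm_cast
  have hkm : (2 * k + 3 + 2 * m : K) ≠ 0 := by norm_cast; lia
  have h_num : (descPochhammer K (m + 1)).eval (a - k - (m + 1 : ℕ)) =
      (a - k - m - 1) * (descPochhammer K m).eval (a - (k + 2 : ℕ) - m) := by
    rw [descPochhammer_succ_eval_left]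
    push_cast
    ring_nf
  have h_asc : (ascPochhammer K m).eval ((k + 2 : ℕ) + 1 / 2 : K) =
      (ascPochhammer K m).eval ((k + 1 : ℕ) + 1 / 2 : K) *
        ((2 * k + 3 + 2 * m) / (2 * k + 3)) := by
    have h := (ascPochhammer_succ_eval_add_half_left (K := K) (k + 1) m).symm.trans
      (ascPochhammer_succ_eval_add_half (k + 1) m)
    rw [mul_div_assoc', eq_div_iff hk]
    push_cast at h ⊢
    linear_combination (norm := ring_nf) 2 * h
  rw [padeRemainderCoeff, padeRemainderCoeff, h_num, descPochhammer_succ_eval_sub_half,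
    ascPochhammer_succ_eval_add_half_left, h_asc, Nat.factorial_succ, pow_succ]
  push_cast
  generalize 2 * a - 1 - 2 * m = u, a - k - m - 1 = v, (2 * k + 3 : K) = y,
    (2 * k + 3 + 2 * m : K) = t at *
  field_simp
  ring

theorem padeRemainderCoeff_recurrence {a : K} {m : ℕ} (ha : a ≠ m + 1 / 2) (k : ℕ) :
    padeRemainderCoeff a k (m + 1) =
      padeRemainderCoeff a (k + 1) (m + 1) +
        1 / (4 * (2 * k + 1) * (2 * k + 3)) * padeRemainderCoeff a (k + 2) m := by
  have ha' : 2 * a - 1 - 2 * m ≠ 0 := fun h => ha (by linear_combination h / 2)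
  have hk : (2 * k + 1 : K) ≠ 0 := by norm_cast
  have hk' : (2 * k + 3 : K) ≠ 0 := by norm_cast
  have hm : (m + 1 : K) ≠ 0 := by norm_cast
  have h_split : (a - k - m - 1) * (2 * k + 3 + 2 * m) =
      (2 * k + 1) * (a - k - 2 * m - 2) + (m + 1) * (2 * a - 1 - 2 * m) := by
    ring
  rw [padeRemainderCoeff_succ, padeRemainderCoeff_succ_succ, h_split]
  generalize 2 * a - 1 - 2 * m = u, (2 * k + 1 : K) = x, (2 * k + 3 : K) = y at *
  field_simp

theorem padeRemainder_recurrence {a : K} (ha : ∀ m : ℕ, a ≠ m + 1 / 2) (k p : ℕ) :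
    padeRemainder a k p =
      padeRemainder a (k + 1) (p + 1) +
        1 / (4 * (2 * k + 1) * (2 * k + 3)) * padeRemainder a (k + 2) p := by
  by_cases hpar : k % 2 = p % 2
  · rcases lt_trichotomy p k with h | rfl | h
    · simp [padeRemainder_of_lt, h, show p < k + 2 by lia]
    · simp [padeRemainder_self, padeRemainder_of_lt]
    · obtain ⟨m, rfl⟩ : ∃ m, p = k + 2 * (m + 1) := ⟨(p - k) / 2 - 1, by lia⟩
      rw [padeRemainder_add_two_mul, padeRemainderCoeff_recurrence (ha m),
        show k + 2 * (m + 1) + 1 = k + 1 + 2 * (m + 1) by lia, padeRemainder_add_two_mul,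
        show k + 2 * (m + 1) = k + 2 + 2 * m by lia, padeRemainder_add_two_mul]
  · rw [padeRemainder_of_mod_two_ne a hpar, padeRemainder_of_mod_two_ne a (by lia),
      padeRemainder_of_mod_two_ne a (by lia), mul_zero, add_zero]

end Remainders

section NaturalParameter

variable {K : Type*} [Field K] [CharZero K]

theorem natCast_ne_add_half (s m : ℕ) : (s : K) ≠ m + 1 / 2 := by
  intro h
  have h_double : ((2 * s : ℕ) : K) = (2 * m + 1 : ℕ) := by
    push_cast
    linear_combination 2 * h
  have := Nat.cast_injective h_double
  lia

theorem padeRemainderCoeff_natCast (k m r : ℕ) :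
    padeRemainderCoeff ((k + 2 * m + r : ℕ) : K) k m =
      ((m + r)! * ((2 * k)! * (k + m)! * ((2 * (k + m + r))! * (k + 2 * m + r)!))) /
        (r ! * (m ! * ((2 * (k + m))! * k ! * ((2 * (k + 2 * m + r))! * (k + m + r)!)))) := by
  have h_num : (descPochhammer K m).eval ((k + 2 * m + r : ℕ) - k - m : K) = (m + r)! / r ! := by
    rw [show ((k + 2 * m + r : ℕ) - k - m : K) = (m + r : ℕ) by push_cast; ring,
      descPochhammer_eval_eq_descFactorial, Nat.descFactorial_eq_div (by lia),
      Nat.add_sub_cancel_left, Nat.cast_div (Nat.factorial_dvd_factorial (by lia))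
        (by exact_mod_cast r.factorial_ne_zero)]
  have h_desc := four_pow_mul_descPochhammer_eval_sub_half (K := K) (k + m + r) m
  rw [show k + m + r + m = k + 2 * m + r by lia] at h_desc
  have h_denom (x y z : K) : 16 ^ m * x * y * z = x * (4 ^ m * y * (4 ^ m * z)) := by
    rw [show (16 : K) = 4 * 4 by norm_num, mul_pow]
    ring
  rw [padeRemainderCoeff, h_num, h_denom, four_pow_mul_ascPochhammer_eval_add_half, h_desc,
    div_mul_div_comm, mul_div_assoc', div_div_div_eq]

end NaturalParameter

theorem padeTheta_of_lt {s i : ℕ} (h : s < i) : padeTheta s i = 0 :=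
  if_neg (by lia)

theorem padeTheta_two_mul {s m : ℕ} (h : m ≤ s) :
    padeTheta s (2 * m) = padeRemainderCoeff (s : ℝ) 0 m := by
  rcases lt_or_ge s (2 * m) with h' | h'
  · rw [padeTheta_of_lt h', padeRemainderCoeff_natCast_eq_zero (by lia) (by lia)]
  · obtain ⟨r, rfl⟩ := Nat.exists_eq_add_of_le h'
    have h_coeff := padeRemainderCoeff_natCast (K := ℝ) 0 m r
    simp only [zero_add] at h_coeff
    rw [h_coeff, padeTheta, if_pos h', show 2 * (2 * m + r) - 2 * m = 2 * (m + r) by lia,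
      Nat.add_sub_cancel_left]
    field_simp

theorem padeTheta_two_mul_add_one {s m : ℕ} (h : m < s) :
    padeTheta s (2 * m + 1) = padeRemainderCoeff (s : ℝ) 1 m / 2 := by
  rcases lt_or_ge s (2 * m + 1) with h' | h'
  · rw [padeTheta_of_lt h', padeRemainderCoeff_natCast_eq_zero (by lia) (by lia), zero_div]
  · obtain ⟨r, rfl⟩ := Nat.exists_eq_add_of_le h'
    rw [add_comm (2 * m) 1, padeRemainderCoeff_natCast, padeTheta, if_pos (by lia),
      show 2 * (1 + 2 * m + r) - (1 + 2 * m) = 2 * (m + r) + 1 by lia, Nat.add_sub_cancel_left,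
      show 2 * (1 + m + r) = 2 * (m + r) + 1 + 1 by lia, show 1 + m + r = m + r + 1 by lia,
      show 2 * (1 + m) = 1 + 2 * m + 1 by lia, add_comm 1 m]
    simp only [Nat.factorial_succ (1 + 2 * m), Nat.factorial_succ (2 * (m + r) + 1),
      Nat.factorial_succ m, Nat.factorial_succ (m + r)]
    push_cast
    field_simp
    ring

theorem padeTheta_eq_padeRemainder {s i : ℕ} (h : i < 2 * s) :
    padeTheta s i = padeRemainder (s : ℝ) 0 i + padeRemainder (s : ℝ) 1 i / 2 := by
  rcases Nat.even_or_odd' i with ⟨m, rfl | rfl⟩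
  · rw [padeTheta_two_mul (by lia), padeRemainder_of_mod_two_ne (k := 1) _ (by lia),
      ← padeRemainder_add_two_mul, zero_add, zero_div, add_zero]
  · rw [padeTheta_two_mul_add_one (by lia), padeRemainder_of_mod_two_ne (k := 0) _ (by lia),
      ← padeRemainder_add_two_mul, add_comm (2 * m) 1, zero_add]

theorem symmCasoratian_padeRemainder_zero {s p q : ℕ} (hp : p < 2 * s) (hq : q < 2 * s) :
    symmCasoratian (padeRemainder (s : ℝ)) 0 p q =
      (1 - (-1) ^ (p + q)) * (padeTheta s p * padeTheta s q) := by
  have hneg {i : ℕ} (h : i < 2 * s) : (-1) ^ i * padeTheta s i =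
      padeRemainder (s : ℝ) 0 i - padeRemainder (s : ℝ) 1 i / 2 := by
    rw [padeTheta_eq_padeRemainder h]
    linear_combination neg_one_pow_mul_padeRemainder (s : ℝ) 0 i +
      neg_one_pow_mul_padeRemainder (s : ℝ) 1 i / 2
  have h_split : (1 - (-1) ^ (p + q)) * (padeTheta s p * padeTheta s q) =
      padeTheta s p * padeTheta s q -
        (-1) ^ p * padeTheta s p * ((-1) ^ q * padeTheta s q) := by
    ring
  rw [h_split, hneg hp, hneg hq, padeTheta_eq_padeRemainder hp, padeTheta_eq_padeRemainder hq,
    symmCasoratian]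
  ring

theorem padeU_apply (s : ℕ) (i j : Fin s) :
    padeU s i j = padeRemainder (s : ℝ) (i + 1) (j + 1) := by
  rcases i with ⟨i, hi⟩
  rcases j with ⟨j, hj⟩
  by_cases h : i ≤ j ∧ i % 2 = j % 2
  · obtain ⟨m, rfl⟩ : ∃ m, j = i + 2 * m := ⟨(j - i) / 2, by lia⟩
    obtain ⟨r, rfl⟩ : ∃ r, s = i + 1 + 2 * m + r := ⟨s - (i + 1 + 2 * m), by lia⟩
    simp only [padeU, Matrix.of_apply, if_pos h]
    rw [show i + 1 + 2 * m + r - 1 - (i + 2 * m) = r by lia,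
      show (i + (i + 2 * m)) / 2 = i + m by lia, show (i + 2 * m - i) / 2 = m by lia,
      show i + 1 + 2 * m + r - 1 - (i + m) = m + r by lia,
      show 2 * (i + 1 + 2 * m + r) + i - (i + 2 * m) = 2 * (i + 1 + m + r) by lia,
      show i + 1 + 2 * m + r - m = i + 1 + m + r by lia,
      show i + (i + 2 * m) + 1 = 2 * (i + m) + 1 by lia,
      show i + 2 * m + 1 = i + 1 + 2 * m by lia, padeRemainder_add_two_mul,
      padeRemainderCoeff_natCast, show 2 * (i + 1) = 2 * i + 1 + 1 by lia,
      show 2 * (i + 1 + m) = 2 * (i + m) + 1 + 1 by lia, show i + 1 + m = i + m + 1 by lia]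
    simp only [Nat.factorial_succ (2 * i + 1), Nat.factorial_succ (2 * (i + m) + 1),
      Nat.factorial_succ i, Nat.factorial_succ (i + m)]
    push_cast
    field_simp
    ring
  · simp only [padeU, Matrix.of_apply, if_neg h]
    exact (if_neg (by lia)).symm

/-- The diagonal entries `d̂_k` of `padeD`, for all natural numbers `k`. -/
noncomputable def padeDiag (k : ℕ) : ℝ :=
  (k ! : ℝ) ^ 2 / ((2 * k)! * (2 * k + 1)!)

theorem padeDiag_zero : padeDiag 0 = 1 := by
  simp [padeDiag]

theorem padeDiag_pos (k : ℕ) : 0 < padeDiag k := by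
  unfold padeDiag
  positivity

theorem padeDiag_succ (k : ℕ) :
    padeDiag (k + 1) = 1 / (4 * (2 * k + 1) * (2 * k + 3)) * padeDiag k := by
  simp only [padeDiag, show 2 * (k + 1) = 2 * k + 1 + 1 by lia, Nat.factorial_succ,
    Nat.cast_mul, Nat.cast_add, Nat.cast_one, Nat.cast_ofNat]
  field_simp
  ring

theorem sum_padeDiag_mul_padeRemainder_add (s p : ℕ) {q : ℕ} (hq : q < s) :
    ∑ k ∈ range s, padeDiag k *
        (padeRemainder (s : ℝ) (k + 1) (p + 1) * padeRemainder (s : ℝ) (k + 1) q) +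
      ∑ k ∈ range s, padeDiag k *
        (padeRemainder (s : ℝ) (k + 1) p * padeRemainder (s : ℝ) (k + 1) (q + 1)) =
      symmCasoratian (padeRemainder (s : ℝ)) 0 p q := by
  have h_last : symmCasoratian (padeRemainder (s : ℝ)) s p q = 0 := by
    simp [symmCasoratian, padeRemainder_of_lt, hq, hq.trans s.lt_succ_self]
  simp only [← sum_add_distrib, ← mul_add]
  rw [sum_mul_eq_symmCasoratian_sub (padeRemainder_recurrence (natCast_ne_add_half s))
    padeDiag_succ, h_last, padeDiag_zero, one_mul, mul_zero, sub_zero]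

theorem sum_padeDiag_mul_padeRemainder {s p q : ℕ} (hp : p < s) (hq : q < s) :
    ∑ k ∈ range s, padeDiag k *
        (padeRemainder (s : ℝ) (k + 1) (p + 1) * padeRemainder (s : ℝ) (k + 1) (q + 1)) =
      ((-1) ^ p + (-1) ^ q) *
        ∑ l ∈ range (q + 1), (-1) ^ l * (padeTheta s l * padeTheta s (p + q + 1 - l)) := by
  have h_sum := neg_one_pow_mul_eq_sum_of_add_eq
    (S := fun p q => ∑ k ∈ range s, padeDiag k *
      (padeRemainder (s : ℝ) (k + 1) p * padeRemainder (s : ℝ) (k + 1) q))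
    (fun p => by simp [padeRemainder_of_lt])
    (fun p q hq => sum_padeDiag_mul_padeRemainder_add s p hq) (p + 1) hq
  have h_term : ∀ l ∈ range (q + 1),
      (-1) ^ l * symmCasoratian (padeRemainder (s : ℝ)) 0 (p + 1 + q - l) l =
        (1 + (-1) ^ (p + q)) * ((-1) ^ l * (padeTheta s l * padeTheta s (p + q + 1 - l))) := by
    intro l hl
    have hlq : l ≤ q := by simpa [Nat.lt_succ_iff] using hl
    rw [symmCasoratian_padeRemainder_zero (by lia) (by lia),
      show p + 1 + q - l + l = p + q + 1 by lia, show p + 1 + q = p + q + 1 by lia]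
    ring
  have h_sign : ((-1 : ℝ) ^ q) * (-1) ^ q = 1 := by simp [← mul_pow]
  refine mul_left_cancel₀ (pow_ne_zero q (neg_ne_zero.2 one_ne_zero)) (h_sum.trans ?_)
  rw [sum_congr rfl h_term, ← mul_sum, ← mul_assoc]
  congr 1
  linear_combination -h_sign

theorem padeUpsilon_apply_of_le {s : ℕ} {i j : Fin s} (h : j ≤ i) :
    padeUpsilon s i j =
      -(((-1) ^ i.val + (-1) ^ j.val) * ∑ l ∈ range (j.val + 1),
        (-1) ^ l * (padeTheta s l * padeTheta s (i.val + j.val + 1 - l))) := by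
  rw [padeUpsilon, Matrix.of_apply, min_eq_right (by exact_mod_cast h), ← mul_neg,
    ← sum_neg_distrib]
  congr 1
  have h_subset : Icc (i.val + j.val + 1 - s) j.val ⊆ range (j.val + 1) := by
    intro l hl
    simp only [mem_Icc, mem_range] at hl ⊢
    lia
  rw [← sum_subset h_subset]
  · exact sum_congr rfl fun l _ => by ring
  · intro l hl hl'
    simp only [mem_Icc, mem_range] at hl hl'
    rw [padeTheta_of_lt (show s < i.val + j.val + 1 - l by lia)]
    ring

theorem padeUpsilon_isSymm (s : ℕ) : (padeUpsilon s).IsSymm :=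
  Matrix.IsSymm.ext fun i j => by simp only [padeUpsilon, Matrix.of_apply, add_comm, min_comm]

theorem padeUpsilon_apply (s : ℕ) (i j : Fin s) :
    padeUpsilon s i j = -∑ k : Fin s, padeDiag k * (padeU s k i * padeU s k j) := by
  simp only [padeU_apply]
  rw [Fin.sum_univ_eq_sum_range fun k => padeDiag k *
    (padeRemainder (s : ℝ) (k + 1) (i + 1) * padeRemainder (s : ℝ) (k + 1) (j + 1))]
  rcases le_total j i with h | h
  · rw [padeUpsilon_apply_of_le h, sum_padeDiag_mul_padeRemainder i.isLt j.isLt]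
  · rw [← (padeUpsilon_isSymm s).apply, padeUpsilon_apply_of_le h,
      ← sum_padeDiag_mul_padeRemainder j.isLt i.isLt]
    simp only [mul_comm (padeRemainder (s : ℝ) _ (j + 1))]

theorem padeUpsilon_eq (s : ℕ) :
    padeUpsilon s = -((padeU s).transpose * padeD s * padeU s) := by
  ext i j
  rw [padeUpsilon_apply, Matrix.neg_apply, Matrix.mul_apply]
  congr 1
  refine sum_congr rfl fun k _ => ?_
  rw [padeD, Matrix.mul_diagonal, Matrix.transpose_apply, padeDiag]
  ring

theorem det_padeU (s : ℕ) : (padeU s).det = 1 := by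
  rw [Matrix.det_of_isUpperTriangular]
  · exact prod_eq_one fun i _ => by rw [padeU_apply, padeRemainder_self]
  · intro i j hij
    rw [padeU_apply]
    exact padeRemainder_of_lt _ (Nat.succ_lt_succ hij)

/-- Theorem 5.1: the unified Cholesky type decomposition `Υ = -U^T D̂ U` of the `(s,s)`
diagonal Padé matrix; in particular `Υ` is negative definite. -/
theorem pade_cholesky (s : ℕ) (hs : 0 < s) :
    padeUpsilon s = -((padeU s).transpose * padeD s * padeU s) ∧
      (-(padeUpsilon s)).PosDef := by
  refine ⟨padeUpsilon_eq s, ?_⟩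
  rw [padeUpsilon_eq, neg_neg, ← Matrix.conjTranspose_eq_transpose_of_trivial]
  refine Matrix.PosDef.conjTranspose_mul_mul_same
    (Matrix.PosDef.diagonal fun k => padeDiag_pos k) ?_
  exact Matrix.mulVec_injective_of_isUnit
    ((Matrix.isUnit_iff_isUnit_det _).2 (by simp [det_padeU]))
end

section
/- Let n be a nonnegative integer and let i, j, s be natural numbers with i < j ≤ s-1, n = j-i even, m = n/2. Then the hypergeometric sum ∑_{ℓ=0}^{n} [(i-j)_ℓ (-s)_ℓ (-i-j-1)_ℓ] / [(-2s)_ℓ (-j)_ℓ ℓ!] equals [n!/m!] · [s!/(s-m)!] · (s-j) · [(s-1-(i+j)/2)!/(s-j)!] · [(2s-j+i)!/(2s)!] · [((i+j)/2)!/j!] (Watson's formula specialization); if n = j-i is odd, the sum equals 0. -/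
/-- The rising factorial (Pochhammer symbol) `(x)_n = x (x+1) ⋯ (x+n-1)`. -/
noncomputable def risingFactorial (x : ℝ) (n : ℕ) : ℝ :=
  ∏ k ∈ Finset.range n, (x + k)

/-!
The sum is the case `c = -s`, `d = -j` of Watson's terminating sum `₃F₂(-n, c, 2d+n-1; 2c, d; 1)`.
Zeilberger's algorithm relates the sum for `(n + 2, d)` to the one for `(n, d + 1)`: the numerator
parameter is `2d+n+1` for both, and the first summand minus a constant multiple of the second is the
forward difference of a rational multiple of the first. Descending by steps of two reduces the
evaluation to `n = 0` and to `n = 1`, where the two terms of the sum cancel.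
-/

open Finset
open scoped Nat

section Pochhammer

theorem eval_ascPochhammer_succ_left {R : Type*} [CommSemiring R] (n : ℕ) (x : R) :
    (ascPochhammer R (n + 1)).eval x = x * (ascPochhammer R n).eval (x + 1) := by
  simp [ascPochhammer_succ_left, Polynomial.eval_comp]

theorem mul_eval_ascPochhammer_add_one {R : Type*} [CommSemiring R] (n : ℕ) (x : R) :
    x * (ascPochhammer R n).eval (x + 1) = (ascPochhammer R n).eval x * (x + n) := by
  rw [← eval_ascPochhammer_succ_left, ascPochhammer_succ_eval]

theorem eval_ascPochhammer_add_one {K : Type*} [Field K] (n : ℕ) {x : K} (hx : x ≠ 0) :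
    (ascPochhammer K n).eval (x + 1) = (ascPochhammer K n).eval x * (x + n) / x :=
  eq_div_of_mul_eq hx <| (mul_comm _ _).trans (mul_eval_ascPochhammer_add_one n x)

theorem eval_ascPochhammer_natCast_add_one {K : Type*} [Field K] [CharZero K] (a n : ℕ) :
    (ascPochhammer K n).eval (a + 1 : K) = (a + n)! / a ! :=
  eq_div_of_mul_eq (mod_cast a.factorial_ne_zero) <|
    (mul_comm _ _).trans (factorial_mul_ascPochhammer K a n)

theorem eval_ascPochhammer_neg_natCast {K : Type*} [Field K] [CharZero K] {a n : ℕ} (h : n ≤ a) :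
    (ascPochhammer K n).eval (-a : K) = (-1) ^ n * (a ! / (a - n)!) := by
  have hfac : ((a - n)! : K) ≠ 0 := mod_cast (a - n).factorial_ne_zero
  rw [ascPochhammer_eval_neg_eq_descPochhammer, descPochhammer_eval_eq_descFactorial,
    ← Nat.factorial_mul_descFactorial h, Nat.cast_mul, mul_div_cancel_left₀ _ hfac]

theorem risingFactorial_eq_eval_ascPochhammer (x : ℝ) (n : ℕ) :
    risingFactorial x n = (ascPochhammer ℝ n).eval x := by
  induction n with
  | zero => simp [risingFactorial]
  | succ n ih =>
    rw [ascPochhammer_succ_eval, ← ih, risingFactorial, prod_range_succ, ← risingFactorial]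

end Pochhammer

section Watson

variable {K : Type*} [Field K]

/-- The `ℓ`-th term of the terminating Watson series `₃F₂(-n, c, 2d+n-1; 2c, d; 1)`. In terms of
Watson's `₃F₂(a, b, c; (a+b+1)/2, 2c; 1)` this is `a = -n`, with `b` eliminated in favour of the
denominator parameter `d = (a+b+1)/2`. -/
noncomputable def watsonTerm (n : ℕ) (c d : K) (ℓ : ℕ) : K :=
  (ascPochhammer K ℓ).eval (-n : K) * (ascPochhammer K ℓ).eval c *
      (ascPochhammer K ℓ).eval (2 * d + n - 1) /
    ((ascPochhammer K ℓ).eval (2 * c) * (ascPochhammer K ℓ).eval d * ℓ !)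

/-- The ratio of Watson's sums for `(n + 2, d)` and `(n, d + 1)`. -/
noncomputable def watsonRatio (n : ℕ) (c d : K) : K :=
  (n + 1) * (d - c) / ((2 * c + n + 1) * d)

/-- The value of Watson's sum for `n = 2m`. By the duplication formula for `(2c)_{2m}` it equals
the classical `(1/2)_m (d-c)_m / ((c+1/2)_m (d)_m)`. -/
noncomputable def watsonEvenValue (m : ℕ) (c d : K) : K :=
  (2 * m)! / m ! * ((ascPochhammer K m).eval c * (ascPochhammer K m).eval (d - c) /
    ((ascPochhammer K (2 * m)).eval (2 * c) * (ascPochhammer K m).eval d))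

theorem watsonTerm_zero (n : ℕ) (c d : K) : watsonTerm n c d 0 = 1 := by
  simp [watsonTerm]

theorem watsonTerm_succ (n : ℕ) (c d : K) (ℓ : ℕ) :
    watsonTerm n c d (ℓ + 1) = watsonTerm n c d ℓ *
      ((ℓ - n) * (c + ℓ) * (2 * d + n - 1 + ℓ) / ((2 * c + ℓ) * (d + ℓ) * (ℓ + 1))) := by
  simp only [watsonTerm, ascPochhammer_succ_eval, Nat.factorial_succ]
  rw [div_mul_div_comm]
  push_cast
  congr 1 <;> ring

theorem watsonTerm_eq_zero {n ℓ : ℕ} (h : n < ℓ) (c d : K) : watsonTerm n c d ℓ = 0 := by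
  simp only [watsonTerm, ascPochhammer_eval_neg_coe_nat_of_lt h, zero_mul, zero_div]

variable [CharZero K]

theorem watsonTerm_add_one (n : ℕ) (c : K) {d : K} (hd : d ≠ 0) (ℓ : ℕ) :
    watsonTerm n c (d + 1) ℓ = watsonTerm (n + 2) c d ℓ *
      ((n + 2 - ℓ) * (n + 1 - ℓ) * d / ((n + 2) * (n + 1) * (d + ℓ))) := by
  have hn₁ : (n + 1 : K) ≠ 0 := by exact_mod_cast n.succ_ne_zero
  have hn₂ : (n + 2 : K) ≠ 0 := by exact_mod_cast (n + 1).succ_ne_zero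
  have hnum : (ascPochhammer K ℓ).eval (-n : K) =
      (ascPochhammer K ℓ).eval (-(n + 2) : K) *
        ((n + 2 - ℓ) * (n + 1 - ℓ) / ((n + 2) * (n + 1))) := by
    rw [show (-n : K) = -(n + 1) + 1 by ring, eval_ascPochhammer_add_one ℓ (neg_ne_zero.mpr hn₁),
      show (-(n + 1) : K) = -(n + 2) + 1 by ring,
      eval_ascPochhammer_add_one ℓ (neg_ne_zero.mpr hn₂),
      show (-(n + 2) + 1 : K) = -(n + 1) by ring]
    field_simp
    ring
  simp only [watsonTerm, Nat.cast_add, Nat.cast_ofNat]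
  rw [hnum, eval_ascPochhammer_add_one ℓ hd,
    show 2 * (d + 1) + n - 1 = 2 * d + (n + 2) - 1 by ring]
  simp only [div_eq_mul_inv, mul_inv, inv_inv]
  ring

/-- The antidifference certifying `sum_watsonTerm_add_two`, as found by Zeilberger's algorithm. -/
noncomputable def watsonAntidifference (n : ℕ) (c d : K) (ℓ : ℕ) : K :=
  -(ℓ * (2 * c + ℓ - 1) / ((n + 2) * (2 * c + n + 1))) * watsonTerm (n + 2) c d ℓ

theorem watsonTerm_sub_watsonRatio_mul {n : ℕ} {c d : K} (hc : ∀ k < n + 2, 2 * c + k ≠ 0)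
    (hd : ∀ k < n + 2, d + k ≠ 0) {ℓ : ℕ} (hℓ : ℓ < n + 2) :
    watsonTerm (n + 2) c d ℓ - watsonRatio n c d * watsonTerm n c (d + 1) ℓ =
      watsonAntidifference n c d (ℓ + 1) - watsonAntidifference n c d ℓ := by
  have hd₀ : d ≠ 0 := by simpa using hd 0 (by omega)
  have hcn : c * 2 + n + 1 ≠ 0 := by simpa [mul_comm, add_assoc] using hc (n + 1) (by omega)
  have hcℓ : c * 2 + ℓ ≠ 0 := mul_comm 2 c ▸ hc ℓ hℓ
  have hdℓ : d + ℓ ≠ 0 := hd ℓ hℓ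
  have hn₁ : (n + 1 : K) ≠ 0 := by exact_mod_cast n.succ_ne_zero
  have hn₂ : (n + 2 : K) ≠ 0 := by exact_mod_cast (n + 1).succ_ne_zero
  have hℓ₁ : (ℓ + 1 : K) ≠ 0 := by exact_mod_cast ℓ.succ_ne_zero
  rw [watsonAntidifference, watsonAntidifference, watsonTerm_add_one n c hd₀, watsonTerm_succ,
    watsonRatio]
  push_cast
  rw [show 2 * c + (ℓ + 1) - 1 = 2 * c + ℓ by ring]
  field_simp
  ring

theorem sum_watsonTerm_add_two {n : ℕ} {c d : K} (hc : ∀ k < n + 2, 2 * c + k ≠ 0)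
    (hd : ∀ k < n + 2, d + k ≠ 0) :
    ∑ ℓ ∈ range (n + 2 + 1), watsonTerm (n + 2) c d ℓ =
      watsonRatio n c d * ∑ ℓ ∈ range (n + 1), watsonTerm n c (d + 1) ℓ := by
  have htelescope : ∑ ℓ ∈ range (n + 2),
      (watsonTerm (n + 2) c d ℓ - watsonRatio n c d * watsonTerm n c (d + 1) ℓ) =
        watsonAntidifference n c d (n + 2) - watsonAntidifference n c d 0 := by
    rw [← sum_range_sub]
    exact sum_congr rfl fun ℓ hℓ => watsonTerm_sub_watsonRatio_mul hc hd (mem_range.mp hℓ)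
  have hfirst : watsonAntidifference n c d 0 = 0 := by simp [watsonAntidifference]
  have hlast : watsonAntidifference n c d (n + 2) = -watsonTerm (n + 2) c d (n + 2) := by
    have hcn : 2 * c + n + 1 ≠ 0 := by simpa [add_assoc] using hc (n + 1) (by omega)
    have hn₂ : (n + 2 : K) ≠ 0 := by exact_mod_cast (n + 1).succ_ne_zero
    rw [watsonAntidifference]
    push_cast
    rw [show 2 * c + (n + 2) - 1 = 2 * c + n + 1 by ring, div_self (mul_ne_zero hn₂ hcn),
      neg_one_mul]
  rw [hfirst, hlast, sum_sub_distrib, ← mul_sum, sum_range_succ (watsonTerm n c (d + 1)),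
    watsonTerm_eq_zero n.lt_succ_self, add_zero] at htelescope
  rw [sum_range_succ]
  linear_combination htelescope

theorem watsonEvenValue_succ {m : ℕ} {c d : K} (hc : 2 * c + (2 * m : ℕ) ≠ 0) :
    watsonEvenValue (m + 1) c d = watsonRatio (2 * m) c d * watsonEvenValue m c (d + 1) := by
  have hm : (m + 1 : K) ≠ 0 := by exact_mod_cast m.succ_ne_zero
  have hcm : c + m ≠ 0 := fun h => hc (by push_cast; linear_combination 2 * h)
  simp only [watsonEvenValue, watsonRatio, show 2 * (m + 1) = 2 * m + 1 + 1 by ring,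
    Nat.factorial_succ, ascPochhammer_succ_eval m c, ascPochhammer_succ_eval _ (2 * c),
    eval_ascPochhammer_succ_left m d, eval_ascPochhammer_succ_left m (d - c),
    show d - c + 1 = d + 1 - c by ring]
  push_cast
  rw [show 2 * c + 2 * m = 2 * (c + m) by ring]
  field_simp
  ring

theorem watson_specialization_general (n : ℕ) (c d : K) (hc : ∀ k < n, 2 * c + k ≠ 0)
    (hd : ∀ k < n, d + k ≠ 0) :
    (Even n → ∑ ℓ ∈ range (n + 1), watsonTerm n c d ℓ = watsonEvenValue (n / 2) c d) ∧
      (Odd n → ∑ ℓ ∈ range (n + 1), watsonTerm n c d ℓ = 0) := by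
  induction n using Nat.twoStepInduction generalizing d with
  | zero => simp [watsonTerm_zero, watsonEvenValue]
  | one =>
    have hc₀ : c ≠ 0 := by simpa using hc 0 one_pos
    have hd₀ : d ≠ 0 := by simpa using hd 0 one_pos
    refine ⟨fun h => absurd h Nat.not_even_one, fun _ => ?_⟩
    rw [sum_range_succ, sum_range_one, watsonTerm_succ, watsonTerm_zero]
    push_cast
    simp only [add_zero, zero_add, add_sub_cancel_right]
    field_simp
    ring
  | more n ih _ =>
    obtain ⟨ih_even, ih_odd⟩ := ih (d + 1) (fun k hk => hc k (by omega)) fun k hk => by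
      simpa [add_assoc, add_comm (1 : K)] using hd (k + 1) (by omega)
    rw [sum_watsonTerm_add_two hc hd]
    constructor
    · intro h
      have hn : Even n := by simpa [Nat.even_add] using h
      have hhalf : n = 2 * (n / 2) := (Nat.two_mul_div_two_of_even hn).symm
      rw [ih_even hn, Nat.add_div_right n two_pos, watsonEvenValue_succ (hc _ (by omega)),
        ← hhalf]
    · intro h
      rw [ih_odd (by simpa [Nat.odd_add] using h), mul_zero]

end Watson

section NegativeIntegerParameters

theorem watsonTerm_neg_natCast {i j : ℕ} (hij : i ≤ j) (s ℓ : ℕ) :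
    watsonTerm (j - i) (-(s : ℝ)) (-(j : ℝ)) ℓ =
      risingFactorial ((i : ℝ) - j) ℓ * risingFactorial (-(s : ℝ)) ℓ *
          risingFactorial (-(i : ℝ) - j - 1) ℓ /
        (risingFactorial (-(2 * s : ℝ)) ℓ * risingFactorial (-(j : ℝ)) ℓ * (ℓ ! : ℝ)) := by
  simp only [watsonTerm, risingFactorial_eq_eval_ascPochhammer, Nat.cast_sub hij]
  ring_nf

theorem watsonEvenValue_neg_natCast {K : Type*} [Field K] [CharZero K] {m j s : ℕ}
    (hmj : 2 * m ≤ j) (hjs : j < s) :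
    watsonEvenValue m (-(s : K)) (-(j : K)) =
      ((2 * m)! / m ! : K) * (s ! / (s - m)!) * (s - j) * ((s - 1 - (j - m))! / (s - j)!) *
        ((2 * s - 2 * m)! / (2 * s)!) * ((j - m)! / j !) := by
  have hsub : (ascPochhammer K m).eval (-(j : K) - -s) =
      (s - j) * ((s - 1 - (j - m))! / (s - j)!) := by
    obtain ⟨k, rfl⟩ := Nat.exists_eq_add_of_lt hjs
    have hk : (k + 1 : K) ≠ 0 := by exact_mod_cast k.succ_ne_zero
    rw [show -(j : K) - -(j + k + 1 : ℕ) = k + 1 by push_cast; ring,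
      eval_ascPochhammer_natCast_add_one, show j + k + 1 - 1 - (j - m) = k + m by omega,
      show j + k + 1 - j = k + 1 by omega, Nat.factorial_succ]
    push_cast
    field_simp
    ring
  have htwo : (ascPochhammer K (2 * m)).eval (2 * -(s : K)) = (2 * s)! / (2 * s - 2 * m)! := by
    rw [show 2 * -(s : K) = -(2 * s : ℕ) by push_cast; ring,
      eval_ascPochhammer_neg_natCast (by omega), Even.neg_one_pow (even_two_mul m), one_mul]
  rw [watsonEvenValue, hsub, htwo, eval_ascPochhammer_neg_natCast (by omega : m ≤ s),
    eval_ascPochhammer_neg_natCast (by omega : m ≤ j), mul_assoc (_ ^ m), mul_left_comm _ (_ ^ m),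
    mul_div_mul_left _ _ (pow_ne_zero m (neg_ne_zero.mpr one_ne_zero))]
  simp only [div_eq_mul_inv, mul_inv, inv_inv]
  ring

end NegativeIntegerParameters

/-- Watson's formula specialization: for `0 ≤ i < j ≤ s-1`, the hypergeometric sum
`∑_{ℓ=0}^{j-i} (i-j)_ℓ (-s)_ℓ (-i-j-1)_ℓ / ((-2s)_ℓ (-j)_ℓ ℓ!)` equals
`(n!/m!)(s!/(s-m)!)(s-j)((s-1-(i+j)/2)!/(s-j)!)((2s-j+i)!/(2s)!)(((i+j)/2)!/j!)` with
`n = j-i`, `m = n/2` when `n` is even, and equals `0` when `n` is odd. -/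
theorem watson_specialization (i j s : ℕ) (hij : i < j) (hj : j ≤ s - 1) (hs : 2 ≤ s) :
    (Even (j - i) →
      ∑ ℓ ∈ Finset.range (j - i + 1),
          risingFactorial ((i : ℝ) - j) ℓ * risingFactorial (-(s : ℝ)) ℓ *
              risingFactorial (-(i : ℝ) - j - 1) ℓ /
            (risingFactorial (-(2 * s : ℝ)) ℓ * risingFactorial (-(j : ℝ)) ℓ *
              (Nat.factorial ℓ : ℝ)) =
        ((Nat.factorial (j - i) : ℝ) / (Nat.factorial ((j - i) / 2) : ℝ)) *
          ((Nat.factorial s : ℝ) / (Nat.factorial (s - (j - i) / 2) : ℝ)) *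
          ((s : ℝ) - (j : ℝ)) *
          ((Nat.factorial (s - 1 - (i + j) / 2) : ℝ) / (Nat.factorial (s - j) : ℝ)) *
          ((Nat.factorial (2 * s - j + i) : ℝ) / (Nat.factorial (2 * s) : ℝ)) *
          ((Nat.factorial ((i + j) / 2) : ℝ) / (Nat.factorial j : ℝ))) ∧
    (Odd (j - i) →
      ∑ ℓ ∈ Finset.range (j - i + 1),
          risingFactorial ((i : ℝ) - j) ℓ * risingFactorial (-(s : ℝ)) ℓ *
              risingFactorial (-(i : ℝ) - j - 1) ℓ /
            (risingFactorial (-(2 * s : ℝ)) ℓ * risingFactorial (-(j : ℝ)) ℓ *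
              (Nat.factorial ℓ : ℝ)) = 0) := by
  have hc (k : ℕ) (hk : k < j - i) : 2 * -(s : ℝ) + k ≠ 0 := by
    have hks : (k : ℝ) < 2 * s := by exact_mod_cast (by omega : k < 2 * s)
    linarith
  have hd (k : ℕ) (hk : k < j - i) : -(j : ℝ) + k ≠ 0 := by
    have hkj : (k : ℝ) < j := by exact_mod_cast (by omega : k < j)
    linarith
  obtain ⟨heven, hodd⟩ := watson_specialization_general (j - i) (-(s : ℝ)) (-(j : ℝ)) hc hd
  simp only [watsonTerm_neg_natCast hij.le] at heven hodd
  refine ⟨fun h => ?_, hodd⟩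
  have hhalf : 2 * ((j - i) / 2) = j - i := Nat.two_mul_div_two_of_even h
  rw [heven h, watsonEvenValue_neg_natCast (by omega) (by omega), hhalf,
    show j - (j - i) / 2 = (i + j) / 2 by omega, show 2 * s - (j - i) = 2 * s - j + i by omega]
end
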